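/- Let A be a finite-dimensional (left) Leibniz algebra over a field of characteristic zero that admits an automorphism σ of prime period (σ^p = id for some prime p) whose only fixed point is 0 (σ(a) = a implies a = 0). Then A is nilpotent. -/

import Mathlib

/-- Span of all brackets `[u, v]` with `u ∈ p`, `v ∈ q`. -/
def bracketSpan {K A : Type*} [Field K] [AddCommGroup A] [Module K A]
    (br : A →ₗ[K] A →ₗ[K] A) (p q : Submodule K A) : Submodule K A :=
  Submodule.span K {x | ∃ a ∈ p, ∃ b ∈ q, br a b = x}

/-- Derived series: `derSeries br 0 = A` and
`derSeries br (n+1) = [derSeries br n, derSeries br n]`; so `derSeries br n = A^(n+1)`.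
The algebra is solvable iff some term vanishes. -/
def derSeries {K A : Type*} [Field K] [AddCommGroup A] [Module K A]
    (br : A →ₗ[K] A →ₗ[K] A) : ℕ → Submodule K A
  | 0 => ⊤
  | n + 1 => bracketSpan br (derSeries br n) (derSeries br n)

/-- Lower central series: `lcs br 0 = A` and `lcs br (n+1) = [A, lcs br n]`;
so `lcs br n = A^(n+1)`.  The algebra is nilpotent iff some term vanishes. -/
def lcs {K A : Type*} [Field K] [AddCommGroup A] [Module K A]
    (br : A →ₗ[K] A →ₗ[K] A) : ℕ → Submodule K A
  | 0 => ⊤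
  | n + 1 => bracketSpan br ⊤ (lcs br n)

/-!
In characteristic `p` the map `σ` is unipotent, so that `A = 0`. Otherwise extend scalars to an
algebraic closure: `A` becomes the sum of the eigenspaces of `σ`, whose eigenvalues are `p`-th roots
of unity other than `1`. If `σ a = μ • a` and `σ b = ν • b`, then `[a, [a, … [a, b] … ]]` with `k`
factors `a` has weight `μ ^ k * ν`; this is `1` for some `k < p` because `μ` is a primitive root, so
`[a, ·]` is nilpotent. These operators form a set closed under commutators, and Jacobson's theorem
on weakly closed sets of nilpotent elements makes their span, the space `L` of all left
multiplications, nilpotent. This suffices since the lower central series of `A` is `L ^ n • A`.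
-/

section OrderedMonoid

variable {M : Type*} [Monoid M] [Preorder M] [MulLeftMono M] [MulRightMono M] {a b : M}

theorem mul_pow_le_pow_mul_of_mul_le (h : a * b ≤ b * a) (n : ℕ) : a * b ^ n ≤ b ^ n * a := by
  induction n with
  | zero => simp
  | succ n ih =>
    calc a * b ^ (n + 1) = a * b ^ n * b := by rw [pow_succ, mul_assoc]
      _ ≤ b ^ n * a * b := by gcongr
      _ = b ^ n * (a * b) := mul_assoc ..
      _ ≤ b ^ n * (b * a) := by gcongr
      _ = b ^ (n + 1) * a := by rw [pow_succ, mul_assoc]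

theorem mul_pow_le_pow_mul_pow_of_mul_le (h : a * b ≤ b * a) (n : ℕ) :
    (b * a) ^ n ≤ b ^ n * a ^ n := by
  induction n with
  | zero => simp
  | succ n ih =>
    calc (b * a) ^ (n + 1) = b * a * (b * a) ^ n := pow_succ' ..
      _ ≤ b * a * (b ^ n * a ^ n) := by gcongr
      _ = b * (a * b ^ n) * a ^ n := by simp only [mul_assoc]
      _ ≤ b * (b ^ n * a) * a ^ n := by
        gcongr ?_ * a ^ n
        exact mul_le_mul_right (mul_pow_le_pow_mul_of_mul_le h n) b
      _ = b ^ (n + 1) * a ^ (n + 1) := by simp only [pow_succ', mul_assoc]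

end OrderedMonoid

section IdemSemiring

variable {R : Type*} [IdemSemiring R] {p q u : R}

theorem add_pow_le_pow_add_pow_mul (hp : p ≤ u) (hq : q ≤ u) (hu : 1 ≤ u) (h : p * u ≤ u * p)
    (n : ℕ) : (p + q) ^ n ≤ q ^ n + u ^ n * p := by
  induction n with
  | zero => simp
  | succ n ih =>
    have hpq : p * q ^ n ≤ u ^ (n + 1) * p :=
      calc p * q ^ n ≤ p * u ^ (n + 1) := by
            gcongr p * ?_
            exact (pow_le_pow_left' hq n).trans (pow_le_pow_right' hu n.le_succ)
        _ ≤ u ^ (n + 1) * p := mul_pow_le_pow_mul_of_mul_le h _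
    calc (p + q) ^ (n + 1) = (p + q) * (p + q) ^ n := pow_succ' ..
      _ ≤ (p + q) * (q ^ n + u ^ n * p) := by gcongr
      _ = p * q ^ n + q ^ (n + 1) + (p + q) * (u ^ n * p) := by
        rw [mul_add, add_mul p q (q ^ n), pow_succ']
      _ ≤ u ^ (n + 1) * p + q ^ (n + 1) + u * (u ^ n * p) := by
        gcongr
        exact add_le hp hq
      _ = q ^ (n + 1) + u ^ (n + 1) * p := by
        rw [← mul_assoc, ← pow_succ', add_right_comm, add_idem, add_comm]

theorem isNilpotent_add_of_mul_le (hp : IsNilpotent p) (hq : IsNilpotent q)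
    (h : p * q ≤ (q + 1) * p) : IsNilpotent (p + q) := by
  obtain ⟨m, hm⟩ := hp
  obtain ⟨n, hn⟩ := hq
  -- A product of `n` factors `p` or `q` either is `q ^ n` or has a factor `p`, which moves to the
  -- right at the cost of replacing the factors it passes by `u`.
  set u := p + (q + 1) with hu
  have hpu : p * u ≤ u * p :=
    calc p * u = p * p + (p * q + p) := by rw [hu, mul_add, mul_add, mul_one]
      _ ≤ p * p + ((q + 1) * p + p) := by gcongr
      _ = u * p := by rw [hu, add_mul p, add_mul q, one_mul, add_assoc, add_idem]
  have hpq : (p + q) ^ n ≤ u ^ n * p := by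
    simpa [hn] using add_pow_le_pow_add_pow_mul (q := q) (le_self_add : p ≤ u)
      (le_self_add.trans le_add_self) (le_add_self.trans le_add_self) hpu n
  refine ⟨n * m, le_antisymm ?_ zero_le⟩
  calc (p + q) ^ (n * m) = ((p + q) ^ n) ^ m := pow_mul ..
    _ ≤ (u ^ n * p) ^ m := pow_le_pow_left' hpq m
    _ ≤ (u ^ n) ^ m * p ^ m :=
      mul_pow_le_pow_mul_pow_of_mul_le (mul_pow_le_pow_mul_of_mul_le hpu n) m
    _ = 0 := by rw [hm, mul_zero]

end IdemSemiring

open Submodule in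
theorem isNilpotent_span_insert {K R : Type*} [CommRing K] [Ring R] [Algebra K R] {T : Set R}
    {s : R} (hT : IsNilpotent (span K T)) (hs : IsNilpotent s)
    (h : ∀ t ∈ T, ∃ γ : K, t * s + γ • (s * t) ∈ span K T) :
    IsNilpotent (span K (insert s T)) := by
  have hs' : IsNilpotent (span K ({s} : Set R)) := by
    obtain ⟨n, hn⟩ := hs
    exact ⟨n, by simp [span_pow, hn]⟩
  have hmul : span K T * span K ({s} : Set R) ≤ (span K {s} + 1) * span K T := by
    rw [span_mul_span, Set.mul_singleton, span_le]
    rintro _ ⟨t, ht, rfl⟩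
    obtain ⟨γ, hγ⟩ := h t ht
    have hts : -(γ • (s * t)) ∈ span K {s} * span K T :=
      neg_mem (smul_mem _ γ (mul_mem_mul (mem_span_singleton_self s) (subset_span ht)))
    rw [SetLike.mem_coe, add_mul, one_mul, Submodule.add_eq_sup]
    simpa using add_mem_sup hts hγ
  rw [Set.insert_eq, span_union, sup_comm]
  exact isNilpotent_add_of_mul_le hT hs' hmul

/-- Jacobson's weakly closed subsets of an associative `K`-algebra. With `γ = -1` throughout these
are the sets closed under commutators; the factor `γ` may depend on `x` and `y`. -/
def IsWeaklyClosed (K : Type*) {R : Type*} [CommSemiring K] [Semiring R] [Algebra K R]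
    (S : Set R) : Prop :=
  ∀ x ∈ S, ∀ y ∈ S, ∃ γ : K, x * y + γ • (y * x) ∈ S

namespace IsWeaklyClosed

open Submodule

variable {K R : Type*} [CommRing K] [Ring R] [Algebra K R] {S T : Set R}

theorem exists_mem_notMem_span_of_isNilpotent (hS : IsWeaklyClosed K S) (hTS : T ⊆ S)
    (hT : IsNilpotent (span K T)) (hST : ¬ S ⊆ span K T) :
    ∃ s ∈ S, s ∉ span K T ∧ ∀ t ∈ T, ∃ γ : K, t * s + γ • (s * t) ∈ span K T := by
  set P := span K T
  -- If `s ∈ Q`, the next candidate `t * s + γ • (s * t)` lies in `Φ Q`, so the search for `s` must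
  -- stop before `Φ ^ n = 0`.
  let Φ : Module.End ℕ (Submodule K R) := LinearMap.mulLeft ℕ P + LinearMap.mulRight ℕ P
  have hΦ : IsNilpotent Φ :=
    (LinearMap.commute_mulLeft_right P P).isNilpotent_add
      ((LinearMap.isNilpotent_mulLeft_iff ℕ P).2 hT)
      ((LinearMap.isNilpotent_mulRight_iff ℕ P).2 hT)
  have descent : ∀ (n : ℕ) (Q : Submodule K R), (Φ ^ n) Q = 0 → ∀ s ∈ S, s ∈ Q → s ∉ P →
      ∃ s ∈ S, s ∉ P ∧ ∀ t ∈ T, ∃ γ : K, t * s + γ • (s * t) ∈ P := by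
    intro n
    induction n with
    | zero =>
      rintro Q rfl s - hsQ hsP
      exact absurd ((mem_bot K).1 hsQ ▸ P.zero_mem) hsP
    | succ n ih =>
      intro Q hQ s hsS hsQ hsP
      by_cases! hnorm : ∀ t ∈ T, ∃ γ : K, t * s + γ • (s * t) ∈ P
      · exact ⟨s, hsS, hsP, hnorm⟩
      obtain ⟨t, ht, hts⟩ := hnorm
      obtain ⟨γ, hγ⟩ := hS t (hTS ht) s hsS
      have htP : t ∈ P := subset_span ht
      refine ih (Φ Q) (by rwa [pow_succ] at hQ) _ hγ ?_ (hts γ)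
      exact add_mem_sup (mul_mem_mul htP hsQ) (smul_mem _ γ (mul_mem_mul hsQ htP))
  obtain ⟨s, hsS, hsP⟩ := Set.not_subset.1 hST
  obtain ⟨n, hn⟩ := hΦ
  exact descent n (span K {s}) (by simp [hn]) s hsS (mem_span_singleton_self s) hsP

theorem isNilpotent_span [IsNoetherian K R] (hS : IsWeaklyClosed K S)
    (hnil : ∀ s ∈ S, IsNilpotent s) : IsNilpotent (span K S) := by
  obtain ⟨T, ⟨hTS, hT⟩, hmax⟩ := exists_maximalFor_of_wellFoundedGT
    (fun T : Set R ↦ T ⊆ S ∧ IsNilpotent (span K T)) (span K) ⟨∅, by simp [← zero_eq_bot]⟩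
  by_cases hST : S ⊆ span K T
  · rwa [le_antisymm (span_le.2 hST) (span_mono hTS)]
  obtain ⟨s, hsS, hsT, hnorm⟩ := hS.exists_mem_notMem_span_of_isNilpotent hTS hT hST
  have hle : span K (insert s T) ≤ span K T :=
    hmax ⟨Set.insert_subset hsS hTS, isNilpotent_span_insert hT (hnil s hsS) hnorm⟩
      (span_mono (Set.subset_insert s T))
  exact absurd (hle (subset_span (Set.mem_insert s T))) hsT

end IsWeaklyClosed

section FiniteOrder

open Polynomial

theorem isSemisimple_of_pow_eq_one {K V : Type*} [Field K] [AddCommGroup V] [Module K V]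
    {f : Module.End K V} {n : ℕ} (hn : (n : K) ≠ 0) (hf : f ^ n = 1) : f.IsSemisimple :=
  Module.End.isSemisimple_of_squarefree_aeval_eq_zero
    (X_pow_sub_one_separable_iff.2 hn).squarefree (by simp [hf])

theorem pow_eq_one_of_hasEigenvector {R M : Type*} [CommRing R] [IsDomain R] [AddCommGroup M]
    [Module R M] [Module.IsTorsionFree R M] {f : Module.End R M} {μ : R} {v : M} {n : ℕ}
    (hv : f.HasEigenvector μ v) (hf : f ^ n = 1) : μ ^ n = 1 := by
  refine smul_left_injective R hv.2 ?_
  simpa [hf] using (hv.pow_apply n).symm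

theorem injective_sub_one_of_forall_apply_eq_self {R M : Type*} [Ring R] [AddCommGroup M]
    [Module R M] {f : Module.End R M} (hfix : ∀ x, f x = x → x = 0) :
    Function.Injective ⇑(f - 1) :=
  (injective_iff_map_eq_zero _).2 fun x hx ↦ hfix x (sub_eq_zero.1 hx)

theorem subsingleton_of_pow_char_eq_one {R M : Type*} [CommRing R] [AddCommGroup M] [Module R M]
    (p : ℕ) [Fact p.Prime] [CharP R p] {f : Module.End R M} (hf : f ^ p = 1)
    (hfix : ∀ x, f x = x → x = 0) : Subsingleton M := by
  have hpow : (f - 1) ^ p = 0 := by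
    simpa [hf] using congrArg (aeval f) (sub_pow_char (X : R[X]) 1)
  have hinj : Function.Injective ⇑(f - 1) := injective_sub_one_of_forall_apply_eq_self hfix
  have hinj_pow : Function.Injective ⇑((f - 1) ^ p) := by
    rw [Module.End.coe_pow]
    exact hinj.iterate p
  exact ⟨fun x y ↦ hinj_pow (by simp [hpow])⟩

end FiniteOrder

/-- The left Leibniz identity for a bilinear multiplication: each left multiplication `br a` is a
derivation. -/
def IsLeftLeibniz {R A : Type*} [CommSemiring R] [AddCommMonoid A] [Module R A]
    (br : A →ₗ[R] A →ₗ[R] A) : Prop :=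
  ∀ a b c : A, br a (br b c) = br (br a b) c + br b (br a c)

theorem IsLeftLeibniz.isWeaklyClosed_image {R A : Type*} [CommRing R] [AddCommGroup A]
    [Module R A] {br : A →ₗ[R] A →ₗ[R] A} (hbr : IsLeftLeibniz br) {H : Set A}
    (hH : ∀ a ∈ H, ∀ b ∈ H, br a b ∈ H) :
    IsWeaklyClosed R (br '' H : Set (Module.End R A)) := by
  rintro _ ⟨a, ha, rfl⟩ _ ⟨b, hb, rfl⟩
  refine ⟨-1, br a b, hH a ha b hb, ?_⟩
  ext c
  simp [hbr a b c]

theorem map_left_mul_pow_apply {R A : Type*} [CommSemiring R] [AddCommMonoid A] [Module R A]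
    {br : A →ₗ[R] A →ₗ[R] A} {σ : Module.End R A} (hσ : ∀ a b, σ (br a b) = br (σ a) (σ b))
    {a b : A} {μ ν : R} (ha : σ a = μ • a) (hb : σ b = ν • b) (n : ℕ) :
    σ ((br a ^ n : Module.End R A) b) = (μ ^ n * ν) • (br a ^ n : Module.End R A) b := by
  induction n with
  | zero => simpa using hb
  | succ n ih =>
    rw [pow_succ', Module.End.mul_apply, hσ, ih, ha, pow_succ]
    simp only [map_smul, LinearMap.smul_apply, smul_smul, mul_right_comm]

section Weights

open Module.End

variable {K A : Type*} [Field K] [AddCommGroup A] [Module K A]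
  {br : A →ₗ[K] A →ₗ[K] A} {σ : Module.End K A}

theorem isNilpotent_left_mul_of_apply_eq_smul (hσ : ∀ a b, σ (br a b) = br (σ a) (σ b))
    {p : ℕ} (hp : p.Prime) (hper : σ ^ p = 1) (hfix : ∀ a, σ a = a → a = 0)
    (htop : ⨆ μ, σ.eigenspace μ = ⊤) {a : A} {μ : K} (ha : σ a = μ • a) :
    IsNilpotent (br a : Module.End K A) := by
  rcases eq_or_ne a 0 with rfl | ha0
  · simp
  have : Fact p.Prime := ⟨hp⟩
  have hμ : IsPrimitiveRoot μ p := by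
    have hμp : μ ^ p = 1 := pow_eq_one_of_hasEigenvector ⟨mem_eigenspace_iff.2 ha, ha0⟩ hper
    have hμ1 : μ ≠ 1 := by
      rintro rfl
      exact ha0 (hfix a (by simpa using ha))
    exact orderOf_eq_prime hμp hμ1 ▸ IsPrimitiveRoot.orderOf μ
  have hker : ⨆ ν, σ.eigenspace ν ≤ LinearMap.ker (br a ^ p : Module.End K A) := by
    refine iSup_le fun ν b hb ↦ ?_
    rcases eq_or_ne b 0 with rfl | hb0
    · exact zero_mem _
    have hνp : ν ^ p = 1 := pow_eq_one_of_hasEigenvector ⟨hb, hb0⟩ hper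
    obtain ⟨k, hk, hkν⟩ := hμ.eq_pow_of_pow_eq_one (ξ := ν⁻¹) (by rw [inv_pow, hνp, inv_one])
    have hν0 : ν ≠ 0 := (IsUnit.of_pow_eq_one hνp hp.ne_zero).ne_zero
    have hk0 : (br a ^ k : Module.End K A) b = 0 := hfix _ <| by
      rw [map_left_mul_pow_apply hσ ha (mem_eigenspace_iff.1 hb), hkν, inv_mul_cancel₀ hν0,
        one_smul]
    rw [LinearMap.mem_ker, ← Nat.sub_add_cancel hk.le, pow_add, Module.End.mul_apply, hk0,
      map_zero]
  rw [htop] at hker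
  exact ⟨p, LinearMap.ker_eq_top.1 (top_le_iff.1 hker)⟩

theorem IsLeftLeibniz.isNilpotent_range [FiniteDimensional K A] (hbr : IsLeftLeibniz br)
    (hσ : ∀ a b, σ (br a b) = br (σ a) (σ b)) {p : ℕ} (hp : p.Prime) (hper : σ ^ p = 1)
    (hfix : ∀ a, σ a = a → a = 0) (htop : ⨆ μ, σ.eigenspace μ = ⊤) :
    IsNilpotent (LinearMap.range br : Submodule K (Module.End K A)) := by
  let H : Set A := {a | ∃ μ : K, σ a = μ • a}
  have hspan : Submodule.span K H = ⊤ := by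
    refine top_le_iff.1 (htop ▸ iSup_le fun μ a ha ↦ ?_)
    exact Submodule.subset_span ⟨μ, mem_eigenspace_iff.1 ha⟩
  have hH : ∀ a ∈ H, ∀ b ∈ H, br a b ∈ H := by
    rintro a ⟨μ, ha⟩ b ⟨ν, hb⟩
    exact ⟨ν * μ, by simp [hσ, ha, hb, smul_smul]⟩
  rw [LinearMap.range_eq_map, ← hspan, Submodule.map_span]
  refine (hbr.isWeaklyClosed_image hH).isNilpotent_span ?_
  rintro _ ⟨a, ⟨μ, ha⟩, rfl⟩
  exact isNilpotent_left_mul_of_apply_eq_smul hσ hp hper hfix htop ha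

end Weights

section LowerCentralSeries

open TensorProduct

variable {K A : Type*} [Field K] [AddCommGroup A] [Module K A] (br : A →ₗ[K] A →ₗ[K] A)

theorem bracketSpan_top (q : Submodule K A) :
    bracketSpan br ⊤ q = (LinearMap.range br : Submodule K (Module.End K A)) • q := by
  apply le_antisymm
  · refine Submodule.span_le.2 ?_
    rintro _ ⟨a, -, b, hb, rfl⟩
    exact Submodule.smul_mem_smul (LinearMap.mem_range_self br a) hb
  · refine Submodule.smul_le.2 ?_
    rintro _ ⟨a, rfl⟩ b hb
    exact Submodule.subset_span ⟨a, Submodule.mem_top, b, hb, rfl⟩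

theorem lcs_eq_range_pow_smul_top (n : ℕ) :
    lcs br n = (LinearMap.range br : Submodule K (Module.End K A)) ^ n • (⊤ : Submodule K A) := by
  induction n with
  | zero => rw [lcs, pow_zero, Submodule.one_smul]
  | succ n ih => rw [lcs, bracketSpan_top, ih, pow_succ', ← smul_eq_mul, Submodule.smul_assoc]

theorem baseChange_lcs_le (F : Type*) [Field F] [Algebra K F] (n : ℕ) :
    (lcs br n).baseChange F ≤ lcs (LinearMap.BilinMap.baseChange F br) n := by
  induction n with
  | zero => exact le_top
  | succ n ih =>
    rw [lcs, bracketSpan, Submodule.baseChange_span, Submodule.span_le]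
    rintro _ ⟨_, ⟨a, -, b, hb, rfl⟩, rfl⟩
    exact Submodule.subset_span ⟨1 ⊗ₜ a, Submodule.mem_top, 1 ⊗ₜ b,
      ih (Submodule.tmul_mem_baseChange_of_mem 1 hb), by simp⟩

variable {br}

theorem lcs_eq_bot_of_baseChange (F : Type*) [Field F] [Algebra K F] {n : ℕ}
    (h : lcs (LinearMap.BilinMap.baseChange F br) n = ⊥) : lcs br n = ⊥ :=
  Submodule.baseChange_injective (A := F) <| by
    rw [Submodule.baseChange_bot, eq_bot_mono (baseChange_lcs_le br F n) h]

end LowerCentralSeries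

section BaseChange

open TensorProduct

variable {R A : Type*} (S : Type*) [CommSemiring R] [CommSemiring S] [Algebra R S]
  [AddCommMonoid A] [Module R A] {br : A →ₗ[R] A →ₗ[R] A} {σ : Module.End R A}

theorem IsLeftLeibniz.baseChange (hbr : IsLeftLeibniz br) :
    IsLeftLeibniz (LinearMap.BilinMap.baseChange S br) := by
  intro a b c
  induction a with
  | zero => simp
  | add a₁ a₂ h₁ h₂ => simp only [map_add, LinearMap.add_apply, h₁, h₂]; abel
  | tmul x a =>
    induction b with
    | zero => simp
    | add b₁ b₂ h₁ h₂ => simp only [map_add, LinearMap.add_apply, h₁, h₂]; abel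
    | tmul y b =>
      induction c with
      | zero => simp
      | add c₁ c₂ h₁ h₂ => simp only [map_add, h₁, h₂]; abel
      | tmul z c =>
        simp only [LinearMap.BilinMap.baseChange_tmul, hbr a b c, tmul_add, mul_assoc,
          mul_left_comm y x z]

theorem baseChange_map_bracket (hσ : ∀ a b, σ (br a b) = br (σ a) (σ b)) (a b : S ⊗[R] A) :
    σ.baseChange S (LinearMap.BilinMap.baseChange S br a b) =
      LinearMap.BilinMap.baseChange S br (σ.baseChange S a) (σ.baseChange S b) := by
  induction a with
  | zero => simp
  | add a₁ a₂ h₁ h₂ => simp only [map_add, LinearMap.add_apply, h₁, h₂]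
  | tmul x a =>
    induction b with
    | zero => simp
    | add b₁ b₂ h₁ h₂ => simp only [map_add, h₁, h₂]
    | tmul y b => simp [hσ]

end BaseChange

open TensorProduct in
theorem eq_zero_of_baseChange_apply_eq_self {R A : Type*} (S : Type*) [CommRing R] [CommRing S]
    [Algebra R S] [Module.Flat R S] [AddCommGroup A] [Module R A] {σ : Module.End R A}
    (hfix : ∀ a, σ a = a → a = 0) (a : S ⊗[R] A) (ha : σ.baseChange S a = a) : a = 0 := by
  have hinj : Function.Injective ⇑(σ - 1) := injective_sub_one_of_forall_apply_eq_self hfix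
  have hinjS : Function.Injective ((σ - 1).baseChange S) :=
    Module.Flat.lTensor_preserves_injective_linearMap _ hinj
  refine (injective_iff_map_eq_zero _).1 hinjS a ?_
  rw [LinearMap.baseChange_sub, LinearMap.baseChange_one, LinearMap.sub_apply, ha,
    Module.End.one_apply, sub_self]

theorem leibniz_nilpotent_of_fixed_point_free_automorphism_general
    {K A : Type*} [Field K] [AddCommGroup A] [Module K A] [FiniteDimensional K A]
    {br : A →ₗ[K] A →ₗ[K] A} (hbr : IsLeftLeibniz br) {σ : Module.End K A}
    (hσ : ∀ a b, σ (br a b) = br (σ a) (σ b)) {p : ℕ} (hp : p.Prime) (hper : σ ^ p = 1)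
    (hfix : ∀ a, σ a = a → a = 0) : ∃ m, lcs br m = ⊥ := by
  by_cases hpK : (p : K) = 0
  · have : Fact p.Prime := ⟨hp⟩
    have : CharP K p := (CharP.charP_iff_prime_eq_zero hp).2 hpK
    have : Subsingleton A := subsingleton_of_pow_char_eq_one p hper hfix
    exact ⟨0, Subsingleton.elim _ _⟩
  let F := AlgebraicClosure K
  have hpF : (p : F) ≠ 0 := by simpa using (algebraMap K F).injective.ne hpK
  have hperF : σ.baseChange F ^ p = 1 := by
    rw [← LinearMap.baseChange_pow, hper, LinearMap.baseChange_one]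
  have htop := (isSemisimple_of_pow_eq_one hpF hperF).iSup_eigenspace_eq_top
  obtain ⟨m, hm⟩ := (hbr.baseChange F).isNilpotent_range (baseChange_map_bracket F hσ) hp hperF
    (eq_zero_of_baseChange_apply_eq_self F hfix) htop
  refine ⟨m, lcs_eq_bot_of_baseChange F ?_⟩
  rw [lcs_eq_range_pow_smul_top, hm, Submodule.zero_eq_bot, Submodule.bot_smul]

/-- a finite-dimensional (left) Leibniz algebra over a field of
characteristic zero admitting an automorphism of prime period with no nonzero
fixed points is nilpotent. -/
theorem leibniz_nilpotent_of_fixed_point_free_automorphism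
    {K A : Type*} [Field K] [CharZero K]
    [AddCommGroup A] [Module K A] [FiniteDimensional K A]
    (br : A →ₗ[K] A →ₗ[K] A)
    (leibniz : ∀ a b c : A, br a (br b c) = br (br a b) c + br b (br a c))
    (σ : A ≃ₗ[K] A)
    (hσ : ∀ a b : A, σ (br a b) = br (σ a) (σ b))
    (p : ℕ) (hp : p.Prime) (hper : σ ^ p = 1)
    (hfix : ∀ a : A, σ a = a → a = 0) :
    ∃ m : ℕ, lcs br m = ⊥ :=
  leibniz_nilpotent_of_fixed_point_free_automorphism_general leibniz hσ hp
    (by rw [← LinearEquiv.automorphismGroup.toLinearMapMonoidHom_apply, ← map_pow, hper, map_one])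
    hfix
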